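/- arXiv:2506.14969 — 3 statements merged into one kernel-verified Lean document; each statement's English description precedes it below -/
import Mathlib

section
/- Let R be a regular local ring of dimension n with maximal ideal m generated by a regular sequence x₁,…,xₙ, and r₁,…,rₙ positive integers. Then S = R[t₁,…,tₙ]/(t₁^{r₁}−x₁,…,tₙ^{rₙ}−xₙ) is a regular local ring of dimension n. -/
universe u

theorem kummer_aux {R : Type u} [CommRing R]
    [IsLocalRing R] (n : ℕ) (hdim : ringKrullDim R = n)
    (x : Fin n → R)
    (hx : Ideal.span (Set.range x) = IsLocalRing.maximalIdeal R)
    (r : Fin n → ℕ) (hr : ∀ i, 0 < r i)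
    {S : Type u} [CommRing S] [Algebra R S] [IsNoetherianRing S] (t : Fin n → S)
    (ht : ∀ i, t i ^ r i = algebraMap R S (x i))
    (hsurj : Function.Surjective (MvPolynomial.aeval (R := R) t))
    (huniv : ∀ (K : Type u) [Field K] (f : R →+* K) (y : Fin n → K),
      (∀ i, y i ^ r i = f (x i)) →
      ∃ g : S →+* K, g.comp (algebraMap R S) = f ∧ ∀ i, g (t i) = y i) :
    ∃ _ : IsLocalRing S, ringKrullDim S = n ∧
      ∃ s : Finset S, s.card = n ∧ Ideal.span (s : Set S) = IsLocalRing.maximalIdeal S := by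
  classical
  have htint : ∀ i, IsIntegral R (t i) := fun i =>
    IsIntegral.of_pow (hr i) (by rw [ht]; exact isIntegral_algebraMap)
  have hint : Algebra.IsIntegral R S := by
    refine ⟨fun s => ?_⟩
    obtain ⟨p, rfl⟩ := hsurj s
    induction p using MvPolynomial.induction_on with
    | C a => simpa using isIntegral_algebraMap
    | add p q hp hq => rw [map_add]; exact hp.add hq
    | mul_X p i hp => rw [map_mul, MvPolynomial.aeval_X]; exact hp.mul (htint i)
  set M : Ideal S := Ideal.span (Set.range t) with hM
  have htM : ∀ i, t i ∈ M := fun i => Ideal.subset_span ⟨i, rfl⟩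
  have hmM : ∀ a ∈ IsLocalRing.maximalIdeal R, algebraMap R S a ∈ M := by
    have : IsLocalRing.maximalIdeal R ≤ M.comap (algebraMap R S) := by
      rw [← hx, Ideal.span_le]
      rintro _ ⟨i, rfl⟩
      simp only [SetLike.mem_coe, Ideal.mem_comap]
      rw [← ht]
      exact Ideal.pow_mem_of_mem _ (htM i) _ (hr i)
    exact this
  have hconst : ∀ s : S, ∃ a : R, s - algebraMap R S a ∈ M := by
    intro s
    obtain ⟨p, rfl⟩ := hsurj s
    induction p using MvPolynomial.induction_on with
    | C a => exact ⟨a, by simp⟩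
    | add p q hp hq =>
      obtain ⟨a, ha⟩ := hp
      obtain ⟨b, hb⟩ := hq
      refine ⟨a + b, ?_⟩
      have := M.add_mem ha hb
      rw [map_add, map_add]
      convert this using 1
      ring
    | mul_X p i hp =>
      refine ⟨0, ?_⟩
      rw [map_mul, MvPolynomial.aeval_X, map_zero, sub_zero]
      exact M.mul_mem_left _ (htM i)
  obtain ⟨g, hg, hgt⟩ := huniv (IsLocalRing.ResidueField R) (IsLocalRing.residue R) 0 (by
    intro i
    have : x i ∈ IsLocalRing.maximalIdeal R := hx ▸ Ideal.subset_span ⟨i, rfl⟩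
    rw [(IsLocalRing.residue_eq_zero_iff _).2 this, Pi.zero_apply, zero_pow (hr i).ne'])
  have hgM : M ≤ RingHom.ker g := by
    rw [hM, Ideal.span_le]
    rintro _ ⟨i, rfl⟩
    simpa [RingHom.mem_ker] using hgt i
  have hker : RingHom.ker g = M := by
    refine le_antisymm ?_ hgM
    intro s hs
    obtain ⟨a, ha⟩ := hconst s
    have h1 := hgM ha
    rw [RingHom.mem_ker, map_sub, RingHom.mem_ker.1 hs, zero_sub, neg_eq_zero,
      ← RingHom.comp_apply, hg, IsLocalRing.residue_eq_zero_iff] at h1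
    simpa using M.add_mem ha (hmM a h1)
  have hgs : Function.Surjective g := by
    intro z
    obtain ⟨a, rfl⟩ := IsLocalRing.residue_surjective z
    exact ⟨algebraMap R S a, by rw [← RingHom.comp_apply, hg]⟩
  have hMmax : M.IsMaximal := hker ▸ RingHom.ker_isMaximal_of_surjective g hgs
  have hloc : IsLocalRing S := by
    refine IsLocalRing.of_unique_max_ideal ⟨M, hMmax, fun N hN => ?_⟩
    have hN' := hN
    refine (hMmax.eq_of_le hN.ne_top ?_).symm
    rw [hM, Ideal.span_le]
    rintro _ ⟨i, rfl⟩
    have h2 : (N.comap (algebraMap R S)).IsMaximal :=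
      Ideal.isMaximal_comap_of_isIntegral_of_isMaximal N
    have h3 := IsLocalRing.eq_maximalIdeal h2
    refine hN.isPrime.mem_of_pow_mem (r i) ?_
    rw [ht, ← Ideal.mem_comap, h3, ← hx]
    exact Ideal.subset_span ⟨i, rfl⟩
  have hMeq : M = IsLocalRing.maximalIdeal S := IsLocalRing.eq_maximalIdeal hMmax
  have hcoe : ((Finset.univ.image t : Finset S) : Set S) = Set.range t := by simp
  have hspan : Ideal.span ((Finset.univ.image t : Finset S) : Set S)
      = IsLocalRing.maximalIdeal S := by rw [hcoe, ← hMeq]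
  have hle : ringKrullDim S ≤ ((Finset.univ.image t).card : ℕ) := by
    rw [← IsLocalRing.maximalIdeal_height_eq_ringKrullDim]
    have := Ideal.height_le_card_of_mem_minimalPrimes_span_finset
      (p := IsLocalRing.maximalIdeal S) (s := Finset.univ.image t) (by
        rw [hspan, Ideal.minimalPrimes_eq_subsingleton_self]; rfl)
    exact_mod_cast this
  have hge : (n : WithBot ℕ∞) ≤ ringKrullDim S := by
    obtain ⟨l, hl⟩ := Order.le_krullDim_iff.1 hdim.ge
    set p := (RelSeries.head l).asIdeal with hp
    have hpp : p.IsPrime := (RelSeries.head l).isPrime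
    let K := AlgebraicClosure (FractionRing (R ⧸ p))
    let f : R →+* K := (algebraMap (FractionRing (R ⧸ p)) K).comp
      ((algebraMap (R ⧸ p) (FractionRing (R ⧸ p))).comp (Ideal.Quotient.mk p))
    have hf : RingHom.ker f = p := by
      ext a
      simp [f, RingHom.mem_ker, Ideal.Quotient.eq_zero_iff_mem]
    choose y hy using fun i => IsAlgClosed.exists_pow_nat_eq (f (x i)) (hr i)
    obtain ⟨q, hq, -⟩ := huniv K f y hy
    have hQ : (RingHom.ker q).IsPrime := RingHom.ker_isPrime q
    have hlo : (RingHom.ker q).LiesOver (RelSeries.head l).asIdeal :=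
      ⟨hf.symm.trans (by rw [← hq]; rfl)⟩
    obtain ⟨L, hL, -⟩ := Ideal.exists_ltSeries_of_hasGoingUp l (RingHom.ker q)
    exact Order.le_krullDim_iff.2 ⟨L, hL.trans hl⟩
  have hcard : (Finset.univ.image t).card ≤ n :=
    Finset.card_image_le.trans (by simp)
  have hcard' : n ≤ (Finset.univ.image t).card := by exact_mod_cast hge.trans hle
  have hc := le_antisymm hcard hcard'
  exact ⟨hloc, le_antisymm (hc ▸ hle) hge, _, hc, hspan⟩

open MvPolynomial in
/-- Let `R` be a regular local ring of dimension `n` with maximal ideal generated by a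
regular sequence `x₁, …, xₙ`, and `r₁, …, rₙ` positive integers.  Then
`S = R[t₁,…,tₙ]/(t₁^{r₁} − x₁, …, tₙ^{rₙ} − xₙ)` is a regular local ring of dimension `n`
(i.e. a noetherian local ring of Krull dimension `n` whose maximal ideal is generated by
`n` elements). -/
theorem kummer_cover_of_regular_local_is_regular_local {R : Type*} [CommRing R]
    [IsNoetherianRing R] [IsLocalRing R] (n : ℕ) (hdim : ringKrullDim R = n)
    (x : Fin n → R) (hreg : RingTheory.Sequence.IsRegular R (List.ofFn x))
    (hx : Ideal.span (Set.range x) = IsLocalRing.maximalIdeal R)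
    (r : Fin n → ℕ) (hr : ∀ i, 0 < r i) :
    IsNoetherianRing (MvPolynomial (Fin n) R ⧸
        Ideal.span (Set.range fun i : Fin n => (X i) ^ r i - C (x i))) ∧
    ∃ _ : IsLocalRing (MvPolynomial (Fin n) R ⧸
        Ideal.span (Set.range fun i : Fin n => (X i) ^ r i - C (x i))),
      ringKrullDim (MvPolynomial (Fin n) R ⧸
          Ideal.span (Set.range fun i : Fin n => (X i) ^ r i - C (x i))) = n ∧
      ∃ s : Finset (MvPolynomial (Fin n) R ⧸
          Ideal.span (Set.range fun i : Fin n => (X i) ^ r i - C (x i))),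
        s.card = n ∧ Ideal.span (s : Set _) = IsLocalRing.maximalIdeal (MvPolynomial (Fin n) R ⧸
          Ideal.span (Set.range fun i : Fin n => (X i) ^ r i - C (x i))) := by
  refine ⟨inferInstance, ?_⟩
  refine kummer_aux n hdim x hx r hr
    (fun i => Ideal.Quotient.mk _ (X i)) (fun i => ?_) ?_ ?_
  · have h : ((X i) ^ r i - C (x i) : MvPolynomial (Fin n) R) ∈
        Ideal.span (Set.range fun i : Fin n => (X i) ^ r i - C (x i)) :=
      Ideal.subset_span ⟨i, rfl⟩
    rw [← map_pow]
    exact Ideal.Quotient.eq.2 h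
  · intro s
    obtain ⟨p, rfl⟩ := Ideal.Quotient.mk_surjective s
    refine ⟨p, ?_⟩
    have : aeval (fun i => Ideal.Quotient.mk (Ideal.span (Set.range fun i : Fin n =>
        (X i) ^ r i - C (x i))) (X i)) = Ideal.Quotient.mkₐ R (Ideal.span (Set.range
          fun i : Fin n => ((X i) ^ r i - C (x i) : MvPolynomial (Fin n) R))) := by
      ext i
      simp
    exact DFunLike.congr_fun this p
  · intro K _ f y hy
    refine ⟨Ideal.Quotient.lift _ (eval₂Hom f y) ?_, ?_, ?_⟩
    · have : Ideal.span (Set.range fun i : Fin n => (X i) ^ r i - C (x i)) ≤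
          RingHom.ker (eval₂Hom f y) := by
        rw [Ideal.span_le]
        rintro _ ⟨i, rfl⟩
        simp [RingHom.mem_ker, hy]
      exact fun a ha => this ha
    · ext a
      exact eval₂_C f y a
    · intro i
      exact eval₂_X f y i
end

section
/- Let R be a regular local ring. Then R is a unique factorization domain. -/
namespace RegUFD

open IsLocalRing CategoryTheory

universe u

section PartA

variable {R : Type u} [CommRing R] [IsLocalRing R]

lemma nontrivial_quot {x : R} (hx : x ∈ maximalIdeal R) : Nontrivial (R ⧸ Ideal.span {x}) :=
  Ideal.Quotient.nontrivial_iff.mpr fun h =>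
    (maximalIdeal.isMaximal R).ne_top (top_le_iff.mp (h ▸ (Ideal.span_singleton_le_iff_mem _).mpr hx))

lemma isLocalRing_quot {x : R} (hx : x ∈ maximalIdeal R) : IsLocalRing (R ⧸ Ideal.span {x}) :=
  have := nontrivial_quot hx
  IsLocalRing.of_surjective' _ Ideal.Quotient.mk_surjective

lemma map_max_quot {x : R} [IsLocalRing (R ⧸ Ideal.span {x})] :
    (maximalIdeal R).map (Ideal.Quotient.mk (Ideal.span {x})) =
      maximalIdeal (R ⧸ Ideal.span {x}) :=
  IsLocalRing.map_maximalIdeal_of_surjective _ Ideal.Quotient.mk_surjective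

/-- embedding dimension drops when dividing by an element of `m \ m²` -/
lemma edim_quot [IsNoetherianRing R] {x : R} (hx : x ∈ maximalIdeal R)
    (hx2 : x ∉ (maximalIdeal R) ^ 2) [IsLocalRing (R ⧸ Ideal.span {x})] :
    (maximalIdeal (R ⧸ Ideal.span {x})).spanFinrank + 1 ≤ (maximalIdeal R).spanFinrank := by
  classical
  have fg := (maximalIdeal R).fg_of_isNoetherianRing
  have fin := Submodule.FG.finite_generators fg
  set G := (maximalIdeal R).generators with hG
  have hspan : Ideal.span G = maximalIdeal R := (maximalIdeal R).span_generators
  have hxs : x ∈ Ideal.span G := hspan ▸ hx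
  obtain ⟨c, hcs, hc⟩ := (Submodule.mem_span_set (R := R) (M := R)).mp hxs
  have : ∃ g ∈ c.support, IsUnit (c g) := by
    by_contra! hcon
    apply hx2
    rw [← hc, pow_two]
    refine Ideal.sum_mem _ fun g hg => Ideal.mul_mem_mul ?_ ?_
    · exact (mem_maximalIdeal _).mpr (hcon g hg)
    · rw [← hspan]; exact Ideal.subset_span (hcs hg)
  obtain ⟨g, hg, hu⟩ := this
  have hgG : g ∈ G := hcs hg
  have key : Ideal.span ((Ideal.Quotient.mk (Ideal.span {x})) '' (G \ {g})) =
      maximalIdeal (R ⧸ Ideal.span {x}) := by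
    rw [← map_max_quot, ← hspan, Ideal.map_span]
    apply le_antisymm
    · exact Ideal.span_mono (Set.image_mono Set.sdiff_subset)
    · rw [Ideal.span_le]
      rintro _ ⟨y, hy, rfl⟩
      by_cases hyg : y = g
      · subst hyg
        have h0 : Ideal.Quotient.mk (Ideal.span {x}) x = 0 :=
          Ideal.Quotient.eq_zero_iff_mem.mpr (Ideal.mem_span_singleton_self x)
        have hc' : x = c y * y + ∑ z ∈ c.support.erase y, c z • z := by
          rw [← smul_eq_mul, Finset.add_sum_erase _ (fun z => c z • z) hg]; exact hc.symm
        have h0 := (congrArg (Ideal.Quotient.mk (Ideal.span {x})) hc').symm.trans h0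
        rw [map_add, map_mul] at h0
        have h1 : Ideal.Quotient.mk (Ideal.span {x}) (c y) * Ideal.Quotient.mk _ y ∈
            Ideal.span ((Ideal.Quotient.mk (Ideal.span {x})) '' (G \ {y})) := by
          rw [eq_neg_of_add_eq_zero_left h0]
          refine neg_mem ?_
          rw [map_sum]
          refine Ideal.sum_mem _ fun z hz => ?_
          rw [smul_eq_mul, map_mul]
          refine Ideal.mul_mem_left _ _ (Ideal.subset_span ⟨z, ⟨hcs (Finset.mem_of_mem_erase hz), ?_⟩, rfl⟩)
          exact Finset.ne_of_mem_erase hz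
        exact (Ideal.unit_mul_mem_iff_mem _ (hu.map _)).mp h1
      · exact Ideal.subset_span ⟨y, ⟨hy, hyg⟩, rfl⟩
  rw [← key]
  have h1 := Submodule.spanFinrank_span_le_ncard_of_finite (R := R ⧸ Ideal.span {x})
    ((fin.sdiff (t := {g})).image (Ideal.Quotient.mk (Ideal.span {x})))
  have h2 := Set.ncard_image_le (f := Ideal.Quotient.mk (Ideal.span {x})) (fin.sdiff (t := {g}))
  have h3 := Set.ncard_sdiff_singleton_add_one hgG fin
  have h4 : G.ncard = _ := Submodule.FG.generators_ncard fg
  change (Submodule.span _ _).spanFinrank + 1 ≤ _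
  omega

lemma edim_le_quot [IsNoetherianRing R] {x : R}
    [IsLocalRing (R ⧸ Ideal.span {x})] :
    (maximalIdeal R).spanFinrank ≤ (maximalIdeal (R ⧸ Ideal.span {x})).spanFinrank + 1 := by
  classical
  have fg := (maximalIdeal (R ⧸ Ideal.span {x})).fg_of_isNoetherianRing
  have fin := Submodule.FG.finite_generators fg
  set G := (maximalIdeal (R ⧸ Ideal.span {x})).generators with hG
  have hspan : Ideal.span G = maximalIdeal (R ⧸ Ideal.span {x}) := Submodule.span_generators _
  let T : Set R := insert x (Quotient.out '' G)
  have hTfin : T.Finite := (fin.image _).insert _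
  have key : Ideal.span T = maximalIdeal R := by
    have hmap : (Ideal.span (Quotient.out '' G)).map (Ideal.Quotient.mk (Ideal.span {x})) =
        maximalIdeal (R ⧸ Ideal.span {x}) := by
      rw [Ideal.map_span, ← hspan, Set.image_image]
      congr 1
      convert Set.image_id G using 2
      exact Ideal.Quotient.mk_out _
    have e : Ideal.span T = (Ideal.span (Quotient.out '' G)) ⊔ Ideal.span {x} := by
      rw [Ideal.span_insert, sup_comm]
    have e2 : (maximalIdeal (R ⧸ Ideal.span {x})).comap (Ideal.Quotient.mk (Ideal.span {x})) =
        Ideal.span (Quotient.out '' G) ⊔ Ideal.span {x} := by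
      rw [← hmap, Ideal.comap_map_of_surjective' _ Ideal.Quotient.mk_surjective, Ideal.mk_ker]
    rw [e, ← e2]
    have := Ideal.comap_isMaximal_of_surjective (Ideal.Quotient.mk (Ideal.span {x}))
      Ideal.Quotient.mk_surjective (K := maximalIdeal (R ⧸ Ideal.span {x}))
    exact IsLocalRing.eq_maximalIdeal this
  rw [← key]
  have h1 := Submodule.spanFinrank_span_le_ncard_of_finite (R := R) hTfin
  have h2 : T.ncard ≤ _ := Set.ncard_insert_le x (Quotient.out '' G)
  have h3 := Set.ncard_image_le (f := Quotient.out) fin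
  have h4 : G.ncard = _ := Submodule.FG.generators_ncard fg
  change (Submodule.span _ _).spanFinrank ≤ _
  omega

lemma dim_quot_ge [IsNoetherianRing R] {x : R} (hx : x ∈ maximalIdeal R) :
    ringKrullDim R ≤ ringKrullDim (R ⧸ Ideal.span {x}) + 1 := by
  rw [← maximalIdeal_height_eq_ringKrullDim]
  exact Ideal.height_le_ringKrullDim_quotient_add_one hx

end PartA

lemma regular_quot {R : Type u} [CommRing R] [IsRegularLocalRing R] {x : R}
    (hx : x ∈ maximalIdeal R) (hx2 : x ∉ (maximalIdeal R) ^ 2) :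
    IsRegularLocalRing (R ⧸ Ideal.span {x}) := by
  have := isLocalRing_quot hx
  apply IsRegularLocalRing.of_spanFinrank_maximalIdeal_le
  have h1 := edim_quot hx hx2
  have h2 := dim_quot_ge hx
  rw [← (isRegularLocalRing_iff R).mp inferInstance] at h2
  have h3 : (((maximalIdeal (R ⧸ Ideal.span {x})).spanFinrank + 1 : ℕ) : WithBot ℕ∞) ≤
    ringKrullDim (R ⧸ Ideal.span {x}) + 1 := le_trans (by exact_mod_cast h1) h2
  push_cast at h3
  exact (ENat.WithBot.add_le_add_one_right_iff).mp h3

lemma not_le_sq {R : Type u} [CommRing R] [IsLocalRing R] [IsNoetherianRing R]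
    (h : maximalIdeal R ≠ ⊥) : ¬ maximalIdeal R ≤ (maximalIdeal R) ^ 2 := by
  intro hle
  apply h
  apply Submodule.eq_bot_of_le_smul_of_le_jacobson_bot (maximalIdeal R) _
    (maximalIdeal R).fg_of_isNoetherianRing
  · rwa [smul_eq_mul, ← pow_two]
  · exact IsLocalRing.maximalIdeal_le_jacobson _

/-- prime avoidance -/
lemma exists_mem_max {R : Type u} [CommRing R] [IsLocalRing R] [IsNoetherianRing R]
    (h : maximalIdeal R ≠ ⊥) (s : Set (Ideal R)) (hs : s.Finite) (hp : ∀ p ∈ s, p.IsPrime)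
    (hm : maximalIdeal R ∉ s) :
    ∃ x ∈ maximalIdeal R, x ∉ (maximalIdeal R) ^ 2 ∧ ∀ p ∈ s, x ∉ p := by
  by_contra! hcon
  have hsub : (maximalIdeal R : Set R) ⊆ ⋃ i ∈ insert ((maximalIdeal R) ^ 2) s, ((id i : Ideal R) : Set R) := by
    intro x hx
    by_cases h2 : x ∈ (maximalIdeal R) ^ 2
    · exact Set.mem_biUnion (Set.mem_insert _ _) h2
    · obtain ⟨p, hp, hxp⟩ := hcon x hx h2
      exact Set.mem_biUnion (Set.mem_insert_of_mem _ hp) hxp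
  rw [Ideal.subset_union_prime_finite (hs.insert _) ((maximalIdeal R) ^ 2) ((maximalIdeal R) ^ 2)] at hsub
  · obtain ⟨i, hi, hle⟩ := hsub
    rcases hi with rfl | hi
    · exact not_le_sq h hle
    · exact hm (by rw [(maximalIdeal.isMaximal R).eq_of_le (hp i hi).ne_top hle]; exact hi)
  · rintro i (rfl | hi) h1 h2
    · exact absurd rfl h1
    · exact hp i hi

lemma regular_isDomain (n : ℕ) : ∀ {R : Type u} [CommRing R] [IsRegularLocalRing R],
    (maximalIdeal R).spanFinrank = n → IsDomain R := by
  induction n with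
  | zero =>
    intro R _ _ h
    rw [Submodule.spanFinrank_eq_zero_iff_eq_bot (maximalIdeal R).fg_of_isNoetherianRing] at h
    exact (IsLocalRing.isField_iff_maximalIdeal_eq.mpr h).isDomain
  | succ n ih =>
    intro R _ _ h
    have hbot : maximalIdeal R ≠ ⊥ := by
      intro h0
      rw [h0] at h
      simp at h
    have hdim := (isRegularLocalRing_iff R).mp inferInstance
    obtain ⟨x, hx, hx2, hxp⟩ := exists_mem_max hbot (minimalPrimes R)
      (minimalPrimes.finite_of_isNoetherianRing R) (fun p hp => hp.1.1) (by
        intro hmem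
        have : (maximalIdeal R).height = 0 := Ideal.height_eq_zero_iff.mpr hmem
        rw [← maximalIdeal_height_eq_ringKrullDim, this, h] at hdim
        norm_cast at hdim)
    have := regular_quot hx hx2
    have hdim' := (isRegularLocalRing_iff (R ⧸ Ideal.span {x})).mp inferInstance
    have h1 := edim_quot hx hx2
    have h2 := edim_le_quot (x := x)
    have : IsDomain (R ⧸ Ideal.span {x}) := ih (by omega)
    have hprime : (Ideal.span {x}).IsPrime := (Ideal.Quotient.isDomain_iff_prime _).mp this
    obtain ⟨p, hp, hple⟩ := Ideal.exists_minimalPrimes_le (I := ⊥) (J := Ideal.span {x}) bot_le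
    have hpp : p.IsPrime := hp.1.1
    have hp0 : p = ⊥ := by
      apply Submodule.eq_bot_of_le_smul_of_le_jacobson_bot (maximalIdeal R) _
        p.fg_of_isNoetherianRing
      · intro y hy
        obtain ⟨z, rfl⟩ := Ideal.mem_span_singleton'.mp (hple hy)
        have : z ∈ p := (hpp.mem_or_mem hy).resolve_right (hxp p hp)
        rw [mul_comm]
        exact Ideal.mul_mem_mul hx this
      · exact IsLocalRing.maximalIdeal_le_jacobson _
    rw [hp0] at hpp
    have : IsDomain (R ⧸ (⊥ : Ideal R)) := (Ideal.Quotient.isDomain_iff_prime _).mpr hpp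
    exact (RingEquiv.quotientBot R).symm.toMulEquiv.isDomain _

section PartB

/-- projective dimension at most `n` -/
abbrev PD (R : Type u) [CommRing R] (M : Type u) [AddCommGroup M] [Module R M] (n : ℕ) : Prop :=
  HasProjectiveDimensionLE (ModuleCat.of R M) n

lemma pd_zero_iff {R : Type u} [CommRing R] {M : Type u} [AddCommGroup M] [Module R M] :
    PD R M 0 ↔ Module.Projective R M := by
  rw [PD, ← projective_iff_hasProjectiveDimensionLE_zero]
  exact (IsProjective.iff_projective M).symm

lemma pd_mono {R : Type u} [CommRing R] {M : Type u} [AddCommGroup M] [Module R M] {n m : ℕ}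
    (h : n ≤ m) (hn : PD R M n) : PD R M m :=
  hasProjectiveDimensionLT_of_ge _ (n + 1) (m + 1) (by omega)

lemma pd_succ_iff {R : Type u} [CommRing R] {K F M : Type u} [AddCommGroup K] [Module R K]
    [AddCommGroup F] [Module R F] [AddCommGroup M] [Module R M] (g : K →ₗ[R] F) (f : F →ₗ[R] M)
    (hg : Function.Injective g) (hf : Function.Surjective f) (hex : Function.Exact g f)
    [Module.Projective R F] (n : ℕ) : PD R M (n + 1) ↔ PD R K n := by
  let S : ShortComplex (ModuleCat.{u} R) := ShortComplex.mk (ModuleCat.ofHom g) (ModuleCat.ofHom f)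
    (by ext y; exact hex.apply_apply_eq_zero y)
  have hS : S.ShortExact :=
    { exact := ModuleCat.shortComplex_exact _ hex
      mono_f := (ModuleCat.mono_iff_injective _).mpr hg
      epi_g := (ModuleCat.epi_iff_surjective _).mpr hf }
  have : Projective S.X₂ := (IsProjective.iff_projective F).mp inferInstance
  exact hS.hasProjectiveDimensionLT_X₃_iff n this

lemma pd_of_equiv {R : Type u} [CommRing R] {M N : Type u} [AddCommGroup N] [Module R N]
    [AddCommGroup M] [Module R M] (e : M ≃ₗ[R] N) {n : ℕ} (h : PD R M n) : PD R N n :=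
  hasProjectiveDimensionLT_of_iso e.toModuleIso (n + 1)

lemma pd_of_retract {R : Type u} [CommRing R] {M N : Type u} [AddCommGroup N] [Module R N]
    [AddCommGroup M] [Module R M] (i : M →ₗ[R] N) (r : N →ₗ[R] M) (hri : r ∘ₗ i = LinearMap.id)
    {n : ℕ} (h : PD R N n) : PD R M n :=
  (Retract.mk (X := ModuleCat.of R M) (Y := ModuleCat.of R N) (ModuleCat.ofHom i) (ModuleCat.ofHom r)
    (by rw [← ModuleCat.ofHom_comp, hri]; rfl)).hasProjectiveDimensionLT (n + 1)

open scoped Pointwise in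
lemma quot_ker_injective {R : Type u} [CommRing R] {x : R} {F M : Type u} [AddCommGroup F]
    [Module R F] [AddCommGroup M] [Module R M] (f : F →ₗ[R] M) (hM : IsSMulRegular M x) :
    Function.Injective (QuotSMulTop.map x (LinearMap.ker f).subtype) := by
  rw [injective_iff_map_eq_zero]
  intro a ha
  obtain ⟨k, rfl⟩ := Submodule.mkQ_surjective _ a
  have ha' : Submodule.Quotient.mk (p := x • (⊤ : Submodule R F)) (k : F) = 0 := ha
  rw [Submodule.Quotient.mk_eq_zero, Submodule.mem_smul_pointwise_iff_exists] at ha'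
  obtain ⟨y, -, hy⟩ := ha'
  have hfy : f y = 0 := by
    apply hM
    change x • f y = x • 0
    rw [smul_zero, ← map_smul, hy]
    exact k.2
  rw [Submodule.mkQ_apply, Submodule.Quotient.mk_eq_zero,
    Submodule.mem_smul_pointwise_iff_exists]
  exact ⟨⟨y, hfy⟩, trivial, Subtype.ext hy⟩

lemma pd_quot_iff {R : Type u} [CommRing R] [IsLocalRing R] [IsNoetherianRing R] {x : R}
    (hx : x ∈ maximalIdeal R) (hreg : IsSMulRegular R x) (n : ℕ) :
    ∀ (M : Type u) [AddCommGroup M] [Module R M] [Module.Finite R M], IsSMulRegular M x →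
    (PD (R ⧸ Ideal.span {x}) (QuotSMulTop x M) n ↔ PD R M n) := by
  have := isLocalRing_quot hx
  induction n with
  | zero =>
    intro M _ _ _ hM
    rw [pd_zero_iff, pd_zero_iff]
    have hfp : Module.FinitePresentation R M := Module.finitePresentation_of_finite R M
    have hmem : x ∈ (⊥ : Ideal R).jacobson := IsLocalRing.maximalIdeal_le_jacobson _ hx
    have key := Module.free_quotSMulTop_iff_free R M hmem hM
    have : Module.Finite (R ⧸ Ideal.span {x}) (QuotSMulTop x M) :=
      Module.Finite.of_restrictScalars_finite R _ _
    constructor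
    · intro h
      have : Module.Free (R ⧸ Ideal.span {x}) (QuotSMulTop x M) := Module.free_of_flat_of_isLocalRing
      have := key.mp this
      infer_instance
    · intro h
      have : Module.Free R M := Module.free_of_flat_of_isLocalRing
      have := key.mpr this
      infer_instance
  | succ n ih =>
    intro M _ _ _ hM
    obtain ⟨F, _, _, _, _, f, hf⟩ := Module.exists_finite_presentation R M
    have hFreg : IsSMulRegular F x := by
      intro a b hab
      apply (Module.Free.chooseBasis R F).repr.injective
      ext i
      apply hreg
      have := congrArg (fun y => (Module.Free.chooseBasis R F).repr y i) hab
      simpa using this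
    have hKreg : IsSMulRegular (LinearMap.ker f) x := by
      intro a b hab
      exact Subtype.ext (hFreg (congrArg Subtype.val hab))
    have h1 := pd_succ_iff (LinearMap.ker f).subtype f (Submodule.subtype_injective _) hf
      (LinearMap.exact_subtype_ker_map f) n
    rw [h1, ← ih (LinearMap.ker f) hKreg]
    let g' := (QuotSMulTop.map x (LinearMap.ker f).subtype).extendScalarsOfSurjective
      (Ideal.Quotient.mk_surjective (I := Ideal.span {x}))
    let f' := (QuotSMulTop.map x f).extendScalarsOfSurjective
      (Ideal.Quotient.mk_surjective (I := Ideal.span {x}))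
    refine pd_succ_iff g' f' ?_ ?_ ?_ n
    · exact quot_ker_injective f hM
    · exact QuotSMulTop.map_surjective x hf
    · exact QuotSMulTop.map_exact x (LinearMap.exact_subtype_ker_map f) hf

end PartB

section PartC

lemma regular_free {R : Type u} [CommRing R] {x : R} (hreg : IsSMulRegular R x) {F : Type u}
    [AddCommGroup F] [Module R F] [Module.Free R F] : IsSMulRegular F x := by
  intro a b hab
  apply (Module.Free.chooseBasis R F).repr.injective
  ext i
  apply hreg
  have := congrArg (fun y => (Module.Free.chooseBasis R F).repr y i) hab
  simpa using this

/-- every finite module over a regular local ring has finite projective dimension -/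
lemma regular_pd (n : ℕ) : ∀ {R : Type u} [CommRing R] [IsRegularLocalRing R],
    (maximalIdeal R).spanFinrank = n → ∀ (M : Type u) [AddCommGroup M] [Module R M]
    [Module.Finite R M], ∃ d, PD R M d := by
  induction n with
  | zero =>
    intro R _ _ h M _ _ _
    rw [Submodule.spanFinrank_eq_zero_iff_eq_bot (maximalIdeal R).fg_of_isNoetherianRing] at h
    let := (IsLocalRing.isField_iff_maximalIdeal_eq.mpr h).toField
    refine ⟨0, pd_zero_iff.mpr ?_⟩
    have : Module.Free R M := Module.Free.of_divisionRing R M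
    infer_instance
  | succ n ih =>
    intro R _ _ h M _ _ _
    have hbot : maximalIdeal R ≠ ⊥ := by
      intro h0
      rw [h0] at h
      simp at h
    have hdom : IsDomain R := regular_isDomain _ rfl
    obtain ⟨x, hx, hx2, -⟩ := exists_mem_max hbot ∅ Set.finite_empty (by simp) (by simp)
    have hx0 : x ≠ 0 := by rintro rfl; exact hx2 (zero_mem _)
    have := regular_quot hx hx2
    have h1 := edim_quot hx hx2
    have h2 := edim_le_quot (x := x)
    have hreg : IsSMulRegular R x := fun a b hab => mul_left_cancel₀ hx0 hab
    obtain ⟨F, _, _, _, _, f, hf⟩ := Module.exists_finite_presentation R M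
    have hKreg : IsSMulRegular (LinearMap.ker f) x := fun a b hab =>
      Subtype.ext (regular_free hreg (congrArg Subtype.val hab))
    have : Module.Finite (R ⧸ Ideal.span {x}) (QuotSMulTop x (LinearMap.ker f)) :=
      Module.Finite.of_restrictScalars_finite R _ _
    obtain ⟨d, hd⟩ := ih (R := R ⧸ Ideal.span {x}) (by omega) (QuotSMulTop x (LinearMap.ker f))
    refine ⟨d + 1, ?_⟩
    rw [pd_succ_iff (LinearMap.ker f).subtype f (Submodule.subtype_injective _) hf
      (LinearMap.exact_subtype_ker_map f) d]
    exact (pd_quot_iff hx hreg d _ hKreg).mp hd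

open TensorProduct in
lemma split_of_socle {R : Type u} [CommRing R] [IsLocalRing R] {s : R} (hs : s ≠ 0)
    (hsm : ∀ y ∈ maximalIdeal R, y * s = 0) {K F : Type u} [AddCommGroup K] [Module R K]
    [AddCommGroup F] [Module R F] [Module.Finite R K] [Module.Finite R F] [Module.Free R K]
    [Module.Free R F] (g : K →ₗ[R] F) (hg : Function.Injective g) :
    ∃ l' : F →ₗ[R] K, l' ∘ₗ g = LinearMap.id := by
  rw [IsLocalRing.split_injective_iff_lTensor_residueField_injective, injective_iff_map_eq_zero]
  have hform : ∀ z : ResidueField R ⊗[R] K, ∃ a : K, z = 1 ⊗ₜ a := by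
    intro z
    induction z with
    | zero => exact ⟨0, by simp⟩
    | add z w hz hw =>
      obtain ⟨a, rfl⟩ := hz
      obtain ⟨b, rfl⟩ := hw
      exact ⟨a + b, by rw [tmul_add]⟩
    | tmul c a =>
      obtain ⟨r, rfl⟩ := IsLocalRing.residue_surjective c
      refine ⟨r • a, ?_⟩
      rw [← smul_tmul, ← ResidueField.algebraMap_eq, Algebra.algebraMap_eq_smul_one]
  intro z hz
  obtain ⟨a, rfl⟩ := hform z
  rw [LinearMap.lTensor_tmul] at hz
  have hF : s • g a = 0 := by
    apply (Module.Free.chooseBasis R F).repr.injective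
    ext i
    have h1 := congrArg (fun w => TensorProduct.rid R (ResidueField R) (LinearMap.lTensor (ResidueField R)
      ((Module.Free.chooseBasis R F).coord i) w)) hz
    simp only [LinearMap.lTensor_tmul, TensorProduct.rid_tmul, map_zero] at h1
    rw [← Algebra.algebraMap_eq_smul_one, ResidueField.algebraMap_eq, IsLocalRing.residue_eq_zero_iff] at h1
    have h2 := hsm _ h1
    rw [map_smul, Finsupp.smul_apply, smul_eq_mul, mul_comm, map_zero, Finsupp.zero_apply]
    exact h2
  have hK : s • a = 0 := hg (by rw [map_smul, hF, map_zero])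
  have hc : ∀ i, (Module.Free.chooseBasis R K).repr a i ∈ maximalIdeal R := by
    intro i
    rw [mem_maximalIdeal, mem_nonunits_iff]
    intro hu
    apply hs
    have := congrArg (fun y => (Module.Free.chooseBasis R K).repr y i) hK
    simp only [map_smul, Finsupp.smul_apply, smul_eq_mul, map_zero, Finsupp.zero_apply] at this
    exact (hu.mul_left_eq_zero).mp this
  rw [← (Module.Free.chooseBasis R K).sum_repr a, tmul_sum]
  refine Finset.sum_eq_zero fun i _ => ?_
  rw [← smul_tmul, ← Algebra.algebraMap_eq_smul_one, ResidueField.algebraMap_eq,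
    (IsLocalRing.residue_eq_zero_iff _).mpr (hc i), zero_tmul]

lemma projective_of_socle {R : Type u} [CommRing R] [IsLocalRing R] [IsNoetherianRing R]
    {s : R} (hs : s ≠ 0) (hsm : ∀ y ∈ maximalIdeal R, y * s = 0) (n : ℕ) :
    ∀ (M : Type u) [AddCommGroup M] [Module R M] [Module.Finite R M], PD R M n →
      Module.Projective R M := by
  induction n with
  | zero => intro M _ _ _ h; exact pd_zero_iff.mp h
  | succ n ih =>
    intro M _ _ _ h
    obtain ⟨F, _, _, _, _, f, hf⟩ := Module.exists_finite_presentation R M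
    rw [pd_succ_iff (LinearMap.ker f).subtype f (Submodule.subtype_injective _) hf
      (LinearMap.exact_subtype_ker_map f) n] at h
    have := ih _ h
    have : Module.Free R (LinearMap.ker f) := Module.free_of_flat_of_isLocalRing
    obtain ⟨l, hl⟩ := split_of_socle hs hsm (LinearMap.ker f).subtype (Submodule.subtype_injective _)
    have htfae := (Function.Exact.split_tfae (LinearMap.exact_subtype_ker_map f)
      (Submodule.subtype_injective _) hf).out 1 0
    obtain ⟨t, ht⟩ := htfae.mp ⟨l, hl⟩
    exact Module.Projective.of_split t f ht

end PartC

section PartD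

open scoped Pointwise in
lemma residue_retract {R : Type u} [CommRing R] [IsLocalRing R] [IsNoetherianRing R] {x : R}
    (hx : x ∈ maximalIdeal R) (hx2 : x ∉ (maximalIdeal R) ^ 2)
    [IsLocalRing (R ⧸ Ideal.span {x})] :
    ∃ (i : ResidueField (R ⧸ Ideal.span {x}) →ₗ[R ⧸ Ideal.span {x}]
        QuotSMulTop x (maximalIdeal R))
      (r : QuotSMulTop x (maximalIdeal R) →ₗ[R ⧸ Ideal.span {x}]
        ResidueField (R ⧸ Ideal.span {x})), r ∘ₗ i = LinearMap.id := by
  let x' : maximalIdeal R := ⟨x, hx⟩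
  let bx : QuotSMulTop x (maximalIdeal R) := Submodule.Quotient.mk x'
  have hi : maximalIdeal (R ⧸ Ideal.span {x}) ≤
      LinearMap.ker (LinearMap.toSpanSingleton (R ⧸ Ideal.span {x}) _ bx) := by
    rw [← map_max_quot, Ideal.map_le_iff_le_comap]
    intro y hy
    rw [Ideal.mem_comap, LinearMap.mem_ker, LinearMap.toSpanSingleton_apply]
    have : (Ideal.Quotient.mk (Ideal.span {x}) y) • bx = Submodule.Quotient.mk (y • x') := rfl
    rw [this, Submodule.Quotient.mk_eq_zero]
    have h2 : y • x' = x • (⟨y, hy⟩ : maximalIdeal R) := Subtype.ext (mul_comm y x)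
    rw [h2]
    exact Submodule.smul_mem_pointwise_smul _ _ _ trivial
  let i : ResidueField (R ⧸ Ideal.span {x}) →ₗ[R ⧸ Ideal.span {x}]
      QuotSMulTop x (maximalIdeal R) :=
    Submodule.liftQ (maximalIdeal (R ⧸ Ideal.span {x})) (LinearMap.toSpanSingleton _ _ bx) hi
  have hne : (maximalIdeal R).toCotangent x' ≠ 0 := by
    rw [Ne, Ideal.toCotangent_eq_zero]
    exact hx2
  obtain ⟨φ, hφ⟩ := Module.Projective.exists_dual_eq_one (ResidueField R) (V := CotangentSpace R) hne
  let j : ResidueField R →ₗ[R] ResidueField (R ⧸ Ideal.span {x}) :=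
    Submodule.liftQ (maximalIdeal R) (Algebra.linearMap R (ResidueField (R ⧸ Ideal.span {x}))) (by
      intro y hy
      rw [LinearMap.mem_ker, Algebra.linearMap_apply,
        IsScalarTower.algebraMap_apply R (R ⧸ Ideal.span {x}), ResidueField.algebraMap_eq,
        IsLocalRing.residue_eq_zero_iff, ← map_max_quot]
      exact Ideal.mem_map_of_mem _ hy)
  have hj : j 1 = 1 := map_one (algebraMap R (ResidueField (R ⧸ Ideal.span {x})))
  let ρ : maximalIdeal R →ₗ[R] ResidueField (R ⧸ Ideal.span {x}) :=
    j ∘ₗ (φ.restrictScalars R) ∘ₗ (maximalIdeal R).toCotangent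
  have hρ : x • (⊤ : Submodule R (maximalIdeal R)) ≤ LinearMap.ker ρ := by
    intro z hz
    obtain ⟨w, -, rfl⟩ := (Submodule.mem_smul_pointwise_iff_exists _ _ _).mp hz
    rw [LinearMap.mem_ker, map_smul, algebra_compatible_smul (R ⧸ Ideal.span {x}) x]
    have : algebraMap R (R ⧸ Ideal.span {x}) x = 0 :=
      Ideal.Quotient.eq_zero_iff_mem.mpr (Ideal.mem_span_singleton_self x)
    rw [this, zero_smul]
  let r0 : QuotSMulTop x (maximalIdeal R) →ₗ[R] ResidueField (R ⧸ Ideal.span {x}) :=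
    Submodule.liftQ _ ρ hρ
  let r := r0.extendScalarsOfSurjective (S := R ⧸ Ideal.span {x}) Ideal.Quotient.mk_surjective
  refine ⟨i, r, ?_⟩
  have hone : r (i 1) = 1 := by
    have h1 : i 1 = bx := one_smul (R ⧸ Ideal.span {x}) bx
    rw [h1]
    change j (φ ((maximalIdeal R).toCotangent x')) = 1
    rw [hφ, hj]
  apply LinearMap.ext
  intro c
  obtain ⟨b, rfl⟩ := IsLocalRing.residue_surjective c
  have : IsLocalRing.residue (R ⧸ Ideal.span {x}) b = b • 1 := by
    rw [← ResidueField.algebraMap_eq, Algebra.algebraMap_eq_smul_one]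
  rw [this, map_smul, LinearMap.comp_apply, hone, map_smul]
  rfl

lemma faithful_of_proj {R : Type u} [CommRing R] [IsLocalRing R] [IsNoetherianRing R]
    (M : Type u) [AddCommGroup M] [Module R M] [Module.Finite R M] [Nontrivial M]
    (h : Module.Projective R M) (y : R) (hy : ∀ m : M, y • m = 0) : y = 0 := by
  have : Module.Free R M := Module.free_of_flat_of_isLocalRing
  apply FaithfulSMul.eq_of_smul_eq_smul (α := M)
  intro a
  rw [hy, zero_smul]

lemma serre (n : ℕ) : ∀ {R : Type u} [CommRing R] [IsLocalRing R] [IsNoetherianRing R] (d : ℕ),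
    (maximalIdeal R).spanFinrank = n → PD R (ResidueField R) d → IsRegularLocalRing R := by
  induction n with
  | zero =>
    intro R _ _ _ d h _
    apply IsRegularLocalRing.of_spanFinrank_maximalIdeal_le
    rw [h]
    exact ringKrullDim_nonneg_of_nontrivial
  | succ n ih =>
    intro R _ _ _ d h hpd
    have hbot : maximalIdeal R ≠ ⊥ := by
      intro h0
      rw [h0] at h
      simp at h
    have hass : maximalIdeal R ∉ associatedPrimes R R := by
      clear ih
      intro ha
      obtain ⟨hp, s, hs⟩ := isAssociatedPrime_iff.mp ha
      have hs0 : s ≠ 0 := by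
        rintro rfl
        apply (maximalIdeal.isMaximal R).ne_top
        rw [hs, Ideal.eq_top_iff_one]
        simp [Submodule.mem_colon_singleton]
      have hsm : ∀ y ∈ maximalIdeal R, y * s = 0 := by
        intro y hy
        rw [hs, Submodule.mem_colon_singleton] at hy
        exact hy
      have hproj := projective_of_socle hs0 hsm d (ResidueField R) hpd
      apply hbot
      rw [eq_bot_iff]
      intro y hy
      refine faithful_of_proj (ResidueField R) hproj y fun c => ?_
      rw [Algebra.smul_def, ResidueField.algebraMap_eq, (IsLocalRing.residue_eq_zero_iff _).mpr hy,
        zero_mul]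
    obtain ⟨x, hx, hx2, hxp⟩ := exists_mem_max hbot (associatedPrimes R R)
      (associatedPrimes.finite R R) (fun p hp => hp.isPrime) hass
    have hreg : IsSMulRegular R x := by
      by_contra hc
      have : x ∈ ⋃ p ∈ associatedPrimes R R, (p : Set R) := by
        rw [biUnion_associatedPrimes_eq_compl_regular R R]
        exact hc
      simp only [Set.mem_iUnion] at this
      obtain ⟨p, hp, hxx⟩ := this
      exact hxp p hp hxx
    have := isLocalRing_quot hx
    have hm : PD R (maximalIdeal R) d := by
      have h1 := pd_mono (Nat.le_succ d) hpd
      refine (pd_succ_iff (maximalIdeal R).subtype (Algebra.linearMap R (ResidueField R))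
        (Submodule.subtype_injective _) IsLocalRing.residue_surjective ?_ d).mp h1
      intro y
      rw [Algebra.linearMap_apply, ResidueField.algebraMap_eq, IsLocalRing.residue_eq_zero_iff]
      simp
    have hmreg : IsSMulRegular (maximalIdeal R) x := fun a b hab =>
      Subtype.ext (hreg (congrArg Subtype.val hab))
    have hq := (pd_quot_iff hx hreg d _ hmreg).mpr hm
    obtain ⟨i, r, hri⟩ := residue_retract hx hx2
    have hq' := pd_of_retract i r hri hq
    have h1 := edim_quot hx hx2
    have h2 := edim_le_quot (x := x)
    have hR := ih d (by omega) hq'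
    apply IsRegularLocalRing.of_spanFinrank_maximalIdeal_le
    have h3 := ringKrullDim_quotient_span_singleton_succ_eq_ringKrullDim_of_mem_nonZeroDivisors
      (x := x) (by
        rw [mem_nonZeroDivisors_iff_right]
        intro z hz
        apply hreg
        simpa [mul_comm] using hz) hx
    rw [← h3, ← hR.spanFinrank_maximalIdeal]
    exact_mod_cast h2

end PartD

section PartE

lemma pd_localize {R : Type u} [CommRing R] (S : Submonoid R) {M N : Type u} [AddCommGroup M]
    [Module R M] [AddCommGroup N] [Module R N] [Module (Localization S) N]
    [IsScalarTower R (Localization S) N] (f : M →ₗ[R] N) [IsLocalizedModule S f] {n : ℕ}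
    (h : PD R M n) : PD (Localization S) N n := by
  have h1 : HasProjectiveDimensionLE ((ModuleCat.of R M).localizedModule S) n :=
    ModuleCat.localizedModule_hasProjectiveDimensionLE n S (ModuleCat.of R M)
  have e1 : Shrink.{u} (LocalizedModule S M) ≃ₗ[Localization S] LocalizedModule S M :=
    Shrink.linearEquiv _ _
  have e2 : LocalizedModule S M ≃ₗ[Localization S] N :=
    LinearEquiv.extendScalarsOfIsLocalization S _ (IsLocalizedModule.iso S f)
  exact pd_of_equiv (e1.trans e2) h1

lemma regular_localization {R : Type u} [CommRing R] [IsRegularLocalRing R] (q : Ideal R)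
    [q.IsPrime] : IsRegularLocalRing (Localization.AtPrime q) := by
  obtain ⟨d, hd⟩ := regular_pd _ (R := R) rfl (R ⧸ q)
  have h1 := pd_localize q.primeCompl (Submodule.toLocalizedQuotient' (Localization.AtPrime q)
    q.primeCompl (Algebra.linearMap R (Localization.AtPrime q)) q) hd
  have heq : Submodule.localized' (Localization.AtPrime q) q.primeCompl
      (Algebra.linearMap R (Localization.AtPrime q)) q = maximalIdeal (Localization.AtPrime q) := by
    rw [Ideal.localized'_eq_map, Localization.AtPrime.map_eq_maximalIdeal]
  have h2 : PD (Localization.AtPrime q) (ResidueField (Localization.AtPrime q)) d :=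
    pd_of_equiv (Submodule.quotEquivOfEq _ _ heq) h1
  have : IsNoetherianRing (Localization.AtPrime q) := IsLocalization.isNoetherianRing q.primeCompl _ inferInstance
  exact serre _ d rfl h2

/-- the module `M` becomes free after adding a finite free module -/
def SF (R : Type u) [CommRing R] (M : Type u) [AddCommGroup M] [Module R M] : Prop :=
  ∃ a b : ℕ, Nonempty ((M × (Fin a → R)) ≃ₗ[R] (Fin b → R))

/-- finite free resolutions -/
def FFR (R : Type u) [CommRing R] : ℕ → ∀ (M : Type u) [AddCommGroup M] [Module R M], Prop
  | 0, M, _, _ => Module.Finite R M ∧ Module.Free R M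
  | n + 1, M, _, _ => ∃ (b : ℕ) (f : (Fin b → R) →ₗ[R] M), Function.Surjective f ∧
      FFR R n (LinearMap.ker f)

lemma ffr_of_pd {R : Type u} [CommRing R] [IsLocalRing R] [IsNoetherianRing R] (n : ℕ) :
    ∀ (M : Type u) [AddCommGroup M] [Module R M] [Module.Finite R M], PD R M n → FFR R n M := by
  induction n with
  | zero =>
    intro M _ _ _ h
    have := pd_zero_iff.mp h
    exact ⟨inferInstance, Module.free_of_flat_of_isLocalRing⟩
  | succ n ih =>
    intro M _ _ _ h
    obtain ⟨b, f, hf⟩ := Module.Finite.exists_fin' R M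
    refine ⟨b, f, hf, ih _ ?_⟩
    exact (pd_succ_iff (LinearMap.ker f).subtype f (Submodule.subtype_injective _) hf
      (LinearMap.exact_subtype_ker_map f) n).mp h

/-- A projective module whose localization source has a finite free resolution is stably free. -/
lemma sf_of_ffr {R : Type u} [CommRing R] (S : Submonoid R) (n : ℕ) :
    ∀ (M N : Type u) [AddCommGroup M] [Module R M] [AddCommGroup N] [Module R N]
    [Module (Localization S) N] [IsScalarTower R (Localization S) N] (f : M →ₗ[R] N)
    [IsLocalizedModule S f] [Module.Projective (Localization S) N], FFR R n M →
    SF (Localization S) N := by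
  induction n with
  | zero =>
    intro M N _ _ _ _ _ _ f _ _ h
    obtain ⟨h1, h2⟩ := h
    let b := Module.Free.chooseBasis R M
    let b' := b.ofIsLocalizedModule (Localization S) S f
    refine ⟨0, Fintype.card (Module.Free.ChooseBasisIndex R M), ⟨?_⟩⟩
    exact (LinearEquiv.prodUnique).trans (b'.reindex (Fintype.equivFin _)).equivFun
  | succ n ih =>
    intro M N _ _ _ _ _ _ f _ _ h
    obtain ⟨b, g, hg, hK⟩ := h
    let A := Localization S
    let ι : (Fin b → R) →ₗ[R] (Fin b → A) := .pi fun i => Algebra.linearMap R A ∘ₗ .proj i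
    have hι : IsLocalizedModule S ι := inferInstance
    let G : (Fin b → A) →ₗ[A] N :=
      (IsLocalizedModule.map S ι f g).extendScalarsOfIsLocalization S A
    have hG : Function.Surjective G := IsLocalizedModule.map_surjective S ι f g hg
    have hker : (LinearMap.ker g).localized' A S ι = LinearMap.ker G :=
      LinearMap.localized'_ker_eq_ker_localizedMap A S ι f g
    obtain ⟨s, hs⟩ := Module.projective_lifting_property G LinearMap.id hG
    obtain ⟨e, -⟩ := (Function.Exact.splitSurjectiveEquiv (LinearMap.exact_subtype_ker_map G)
      (Submodule.subtype_injective _)) ⟨s, hs⟩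
    have hproj : Module.Projective A (LinearMap.ker G) :=
      Module.Projective.of_split (e.symm.toLinearMap ∘ₗ LinearMap.inl A _ _)
        (LinearMap.fst A _ _ ∘ₗ e.toLinearMap) (by ext; simp)
    have hproj' : Module.Projective A ((LinearMap.ker g).localized' A S ι) := by rwa [hker]
    obtain ⟨a, c, ⟨φ⟩⟩ := ih (LinearMap.ker g) ((LinearMap.ker g).localized' A S ι)
      (Submodule.toLocalized' A S ι (LinearMap.ker g)) hK
    let φ' : ((LinearMap.ker G) × (Fin a → A)) ≃ₗ[A] (Fin c → A) :=
      (LinearEquiv.prodCongr (LinearEquiv.ofEq _ _ hker.symm) (LinearEquiv.refl _ _)).trans φ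
    refine ⟨c, b + a, ⟨?_⟩⟩
    let e1 : (N × (Fin c → A)) ≃ₗ[A] N × (LinearMap.ker G × (Fin a → A)) :=
      LinearEquiv.prodCongr (LinearEquiv.refl _ _) φ'.symm
    let e2 : (N × (LinearMap.ker G × (Fin a → A))) ≃ₗ[A] (N × LinearMap.ker G) × (Fin a → A) :=
      (LinearEquiv.prodAssoc A N (LinearMap.ker G) (Fin a → A)).symm
    let e3 : ((N × LinearMap.ker G) × (Fin a → A)) ≃ₗ[A] (Fin b → A) × (Fin a → A) :=
      LinearEquiv.prodCongr ((LinearEquiv.prodComm A _ _).trans e.symm) (LinearEquiv.refl _ _)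
    let e4 : ((Fin b → A) × (Fin a → A)) ≃ₗ[A] (Fin (b + a) → A) :=
      (LinearEquiv.sumArrowLequivProdArrow (Fin b) (Fin a) A A).symm.trans
        (LinearEquiv.funCongrLeft A A finSumFinEquiv.symm)
    exact e1.trans (e2.trans (e3.trans e4))

end PartE

section PartF

lemma principal_of_equiv {S : Type u} [CommRing S] [IsDomain S] (P : Ideal S) (a : ℕ)
    (φ : (P × (Fin a → S)) ≃ₗ[S] (Fin (a + 1) → S)) : P.IsPrincipal := by
  classical
  let c : Fin a → (Fin (a + 1) → S) := fun i => φ (0, Pi.single i 1)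
  let d : P →ₗ[S] S :=
    (Matrix.detRowAlternating (n := Fin (a + 1)) (R := S)).toMultilinearMap.toLinearMap
      (Fin.cons 0 c) 0 ∘ₗ φ.toLinearMap ∘ₗ LinearMap.inl S P (Fin a → S)
  have hd : ∀ p, d p = Matrix.det (Matrix.of (Fin.cons (φ (p, 0)) c)) := by
    intro p
    change Matrix.det (Function.update (Fin.cons 0 c) 0 (φ (p, 0))) = _
    rw [Fin.update_cons_zero]
    rfl
  have hφc : ∀ v : Fin a → S, φ (0, v) = ∑ i, v i • c i := by
    intro v
    have h3 : v = ∑ i, v i • (Pi.single i 1 : Fin a → S) := by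
      ext j
      simp [Finset.sum_apply, Pi.single_apply]
    have h4 := congrArg (φ.toLinearMap ∘ₗ LinearMap.inr S P (Fin a → S)) h3
    rw [map_sum] at h4
    simp only [map_smul] at h4
    exact h4
  have hinj : Function.Injective d := by
    rw [injective_iff_map_eq_zero]
    intro p hp
    by_contra hp0
    rw [hd, ← Matrix.exists_vecMul_eq_zero_iff] at hp
    obtain ⟨v, hv0, hv⟩ := hp
    have h1 : φ (v 0 • p, fun i => v i.succ) = 0 := by
      have : (v 0 • p, fun i : Fin a => v i.succ) = v 0 • (p, (0 : Fin a → S)) +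
        ((0 : P), fun i => v i.succ) := by simp
      rw [this, map_add, map_smul, hφc, ← hv, Matrix.vecMul_eq_sum, Fin.sum_univ_succ]
      rfl
    rw [map_eq_zero_iff φ φ.injective, Prod.mk_eq_zero] at h1
    apply hv0
    funext i
    refine Fin.cases ?_ (fun i => ?_) i
    · exact (smul_eq_zero.mp h1.1).resolve_right hp0
    · exact congrFun h1.2 i
  have key : ∀ (k : Type u) [Field k] (ρ : S →+* k), Function.Surjective ρ → ∃ p, ρ (d p) ≠ 0 := by
    intro k _ ρ hρ
    by_contra! hcon
    have hli : LinearIndependent k (fun i : Fin a => (fun j => ρ (c i j) : Fin (a + 1) → k)) := by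
      rw [Fintype.linearIndependent_iff]
      intro vb hvb i
      choose v hv using fun i => hρ (vb i)
      have hu : ∀ j, ρ ((∑ i, v i • c i) j) = 0 := by
        intro j
        have := congrFun hvb j
        simpa [Finset.sum_apply, hv] using this
      rw [← hφc] at hu
      have h2 : v = (φ.symm (φ (0, v))).2 := by simp
      have h3 : φ (0, v) = ∑ j, φ (0, v) j • (Pi.single j 1 : Fin (a + 1) → S) := by
        ext j
        simp [Finset.sum_apply, Pi.single_apply]
      rw [h3, map_sum, Prod.snd_sum] at h2
      rw [← hv, congrFun h2 i, Finset.sum_apply, map_sum]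
      refine Finset.sum_eq_zero fun j _ => ?_
      rw [map_smul, Prod.smul_snd, Pi.smul_apply, smul_eq_mul, map_mul, hu, zero_mul]
    have hne : Submodule.span k (Set.range (fun i : Fin a => (fun j => ρ (c i j) : Fin (a + 1) → k)))
        ≠ ⊤ := by
      intro htop
      have h1 := finrank_range_le_card (R := k) (fun i : Fin a => (fun j => ρ (c i j) : Fin (a + 1) → k))
      rw [Set.finrank, htop, finrank_top, Module.finrank_fin_fun, Fintype.card_fin] at h1
      omega
    obtain ⟨wb, hwb⟩ : ∃ wb, wb ∉ Submodule.span k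
        (Set.range (fun i : Fin a => (fun j => ρ (c i j) : Fin (a + 1) → k))) := by
      by_contra! h
      exact hne (Submodule.eq_top_iff'.mpr h)
    choose w hw using fun j => hρ (wb j)
    have hli2 := (linearIndependent_finCons.mpr ⟨hli, hwb⟩)
    have hdet := (Matrix.linearIndependent_rows_iff_isUnit
      (A := Matrix.of (Fin.cons wb (fun i : Fin a => (fun j => ρ (c i j)))))).mp hli2
    rw [Matrix.isUnit_iff_isUnit_det] at hdet
    apply hdet.ne_zero
    have hmap : (Matrix.of (Fin.cons wb (fun i : Fin a => (fun j => ρ (c i j))))) =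
        ρ.mapMatrix (Matrix.of (Fin.cons w c)) := by
      ext i j
      refine Fin.cases ?_ (fun i => ?_) i
      · simp [hw]
      · simp
    rw [hmap, ← RingHom.map_det]
    have hw2 : w = φ ((φ.symm w).1, 0) + ∑ i, (φ.symm w).2 i • c i := by
      rw [← hφc, ← map_add]
      simp
    have hdd : Matrix.det (Matrix.of (Fin.cons w c)) = d (φ.symm w).1 := by
      let D := (Matrix.detRowAlternating (n := Fin (a + 1)) (R := S)).toMultilinearMap.toLinearMap
        (Fin.cons 0 c) 0
      have hD : ∀ u, D u = Matrix.det (Matrix.of (Fin.cons u c)) := by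
        intro u
        change Matrix.det (Function.update (Fin.cons 0 c) 0 u) = _
        rw [Fin.update_cons_zero]
        rfl
      have hDc : ∀ i, D (c i) = 0 := by
        intro i
        rw [hD]
        exact Matrix.det_zero_of_row_eq (i := 0) (j := i.succ) (Fin.succ_ne_zero i).symm (by
          ext; simp)
      rw [hd, ← hD, ← hD]
      conv_lhs => rw [hw2, map_add, map_sum]
      simp only [map_smul, hDc, smul_zero, Finset.sum_const_zero, add_zero]
    rw [hdd]
    exact hcon _
  have hsurj : LinearMap.range d = ⊤ := by
    by_contra hne
    obtain ⟨m, hm, hle⟩ := Ideal.exists_le_maximal (LinearMap.range d) hne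
    let := Ideal.Quotient.field m
    obtain ⟨p, hp⟩ := key (S ⧸ m) (Ideal.Quotient.mk m) Ideal.Quotient.mk_surjective
    exact hp (Ideal.Quotient.eq_zero_iff_mem.mpr (hle ⟨p, rfl⟩))
  let e := LinearEquiv.ofBijective d ⟨hinj, LinearMap.range_eq_top.mp hsurj⟩
  refine ⟨⟨(e.symm 1 : P), ?_⟩⟩
  ext y
  rw [Submodule.mem_span_singleton]
  constructor
  · intro hy
    refine ⟨e ⟨y, hy⟩, ?_⟩
    rw [← Submodule.coe_smul, ← map_smul, smul_eq_mul, mul_one, LinearEquiv.symm_apply_apply]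
  · rintro ⟨r, rfl⟩
    exact P.smul_mem _ (e.symm 1).2

lemma principal_of_sf {S : Type u} [CommRing S] [IsDomain S] (P : Ideal S) (h : SF S P) :
    P.IsPrincipal := by
  by_cases hP : P = ⊥
  · rw [hP]; infer_instance
  obtain ⟨a, b, ⟨φ⟩⟩ := h
  obtain ⟨p, hp, hp0⟩ := Submodule.exists_mem_ne_zero_of_ne_bot hP
  let cons : (S × (Fin a → S)) ≃ₗ[S] (Fin (a + 1) → S) := Fin.consLinearEquiv S (fun _ => S)
  have h1 : a + 1 ≤ b := by
    refine le_of_fin_injective S (φ.toLinearMap ∘ₗ LinearMap.prodMap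
      (LinearMap.toSpanSingleton S P ⟨p, hp⟩) LinearMap.id ∘ₗ cons.symm.toLinearMap) ?_
    have h0 : Function.Injective (LinearMap.toSpanSingleton S P ⟨p, hp⟩) := by
      rw [injective_iff_map_eq_zero]
      intro r hr
      exact (smul_eq_zero.mp hr).resolve_right (fun h => hp0 (congrArg Subtype.val h))
    exact φ.injective.comp
      ((Function.Injective.prodMap h0 Function.injective_id).comp cons.symm.injective)
  have h2 : b ≤ a + 1 := by
    refine le_of_fin_injective S (cons.toLinearMap ∘ₗ LinearMap.prodMap
      P.subtype LinearMap.id ∘ₗ φ.symm.toLinearMap) ?_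
    exact cons.injective.comp
      ((Function.Injective.prodMap (Submodule.subtype_injective P) Function.injective_id).comp
        φ.symm.injective)
  obtain rfl : b = a + 1 := le_antisymm h2 h1
  exact principal_of_equiv P a φ

end PartF

section PartG

lemma projective_of_principal {S : Type u} [CommRing S] [IsDomain S] (J : Ideal S)
    (h : J.IsPrincipal) : Module.Projective S J := by
  obtain ⟨a, rfl⟩ := h.principal
  by_cases ha : a = 0
  · subst ha
    have : Subsingleton (Submodule.span S {(0 : S)}) := by
      rw [Submodule.span_zero_singleton]; infer_instance
    infer_instance
  · exact Module.Projective.of_equiv (LinearEquiv.toSpanNonzeroSingleton S S a ha)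

lemma projective_of_local_ufd {S : Type u} [CommRing S] [IsDomain S] [IsNoetherianRing S]
    (P : Ideal S) [P.IsPrime] (hP : P.height = 1)
    (h : ∀ (Q : Ideal S) [Q.IsMaximal], UniqueFactorizationMonoid (Localization.AtPrime Q)) :
    Module.Projective S P := by
  have : Module.FinitePresentation S P := Module.finitePresentation_of_finite S P
  apply Module.projective_of_localization_maximal
  intro Q hQ
  have := h Q
  let J : Ideal (Localization.AtPrime Q) := P.map (algebraMap S (Localization.AtPrime Q))
  have hJ : J.IsPrincipal := by
    by_cases hle : P ≤ Q
    · have hdisj : Disjoint (Q.primeCompl : Set S) (P : Set S) := by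
        rw [Set.disjoint_left]
        intro y hy hy'
        exact hy (hle hy')
      have hJp : J.IsPrime := IsLocalization.isPrime_of_isPrime_disjoint Q.primeCompl _ P ‹_› hdisj
      have hJh : J.height = 1 := by
        rw [← IsLocalization.height_under Q.primeCompl, ← hP]
        congr 1
        exact IsLocalization.under_map_of_isPrime_disjoint Q.primeCompl _ ‹_› hdisj
      exact UniqueFactorizationMonoid.isPrincipal_of_height_eq_one hJh
    · have : J = ⊤ := by
        obtain ⟨y, hy, hyQ⟩ := SetLike.not_le_iff_exists.mp hle
        exact Ideal.eq_top_of_isUnit_mem _ (Ideal.mem_map_of_mem _ hy)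
          (IsLocalization.map_units (Localization.AtPrime Q) (⟨y, hyQ⟩ : Q.primeCompl))
      rw [this]
      exact inferInstance
  have hproj := projective_of_principal J hJ
  have heq : Submodule.localized' (Localization.AtPrime Q) Q.primeCompl
      (Algebra.linearMap S (Localization.AtPrime Q)) P = J := Ideal.localized'_eq_map _ _ _
  rw [← heq] at hproj
  exact Module.Projective.of_equiv (LinearEquiv.extendScalarsOfIsLocalization Q.primeCompl
    (Localization.AtPrime Q) (IsLocalizedModule.iso Q.primeCompl
      (Submodule.toLocalized' (Localization.AtPrime Q) Q.primeCompl
      (Algebra.linearMap S (Localization.AtPrime Q)) P))).symm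

lemma regular_ufd (n : ℕ) : ∀ {R : Type u} [CommRing R] [IsRegularLocalRing R],
    (maximalIdeal R).spanFinrank = n → UniqueFactorizationMonoid R := by
  induction n using Nat.strong_induction_on with
  | _ n ih =>
  intro R _ _ hn
  have hdom : IsDomain R := regular_isDomain _ rfl
  by_cases hbot : maximalIdeal R = ⊥
  · let := (IsLocalRing.isField_iff_maximalIdeal_eq.mpr hbot).toField
    exact inferInstanceAs (UniqueFactorizationMonoid R)
  obtain ⟨x, hx, hx2, -⟩ := exists_mem_max hbot ∅ Set.finite_empty (by simp) (by simp)
  have hx0 : x ≠ 0 := by rintro rfl; exact hx2 (zero_mem _)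
  have := regular_quot hx hx2
  have hd' : IsDomain (R ⧸ Ideal.span {x}) := regular_isDomain _ rfl
  have hxp : Prime x := by
    rw [← Ideal.span_singleton_prime hx0]
    exact (Ideal.Quotient.isDomain_iff_prime _).mp hd'
  rw [UniqueFactorizationMonoid.iff_localizationAway_of_prime hxp]
  let S := Localization.Away x
  have hle : Submonoid.powers x ≤ nonZeroDivisors R := powers_le_nonZeroDivisors_of_noZeroDivisors hx0
  have hSdom : IsDomain S := IsLocalization.isDomain_of_le_nonZeroDivisors S hle
  have hSn : IsNoetherianRing S := IsLocalization.isNoetherianRing (Submonoid.powers x) S inferInstance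
  apply UniqueFactorizationMonoid.of_forall_isPrincipal_of_height_eq_one
  intro P hPp hP
  have hproj : Module.Projective S P := by
    refine projective_of_local_ufd P hP ?_
    intro Q hQ
    let q : Ideal R := Q.under R
    have hloc : IsLocalization.AtPrime (Localization.AtPrime Q) q :=
      IsLocalization.isLocalization_isLocalization_atPrime_isLocalization (Submonoid.powers x) _ Q
    let e := (IsLocalization.algEquiv q.primeCompl (Localization.AtPrime q)
      (Localization.AtPrime Q)).toRingEquiv
    have := regular_localization q
    have hlt : (maximalIdeal (Localization.AtPrime q)).spanFinrank < n := by
      have h1 : q < maximalIdeal R := by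
        refine lt_of_le_of_ne (IsLocalRing.le_maximalIdeal Ideal.IsPrime.ne_top') ?_
        intro h
        have : x ∈ q := h ▸ hx
        exact hQ.ne_top (Ideal.eq_top_of_isUnit_mem _ this
          (IsLocalization.Away.algebraMap_isUnit x))
      have h2 : q.height < (maximalIdeal R).height := Ideal.height_strict_mono_of_isPrime_of_isPrime h1
      have h3 := IsRegularLocalRing.spanFinrank_maximalIdeal (R := Localization.AtPrime q)
      have h4 := IsRegularLocalRing.spanFinrank_maximalIdeal (R := R)
      rw [IsLocalization.AtPrime.ringKrullDim_eq_height q] at h3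
      rw [← maximalIdeal_height_eq_ringKrullDim] at h4
      have h5 : (((maximalIdeal (Localization.AtPrime q)).spanFinrank : ℕ) : ℕ∞) <
        ((maximalIdeal R).spanFinrank : ℕ) := by
        have h3' : (((maximalIdeal (Localization.AtPrime q)).spanFinrank : ℕ) : ℕ∞) = q.height := by
          exact_mod_cast h3
        have h4' : (((maximalIdeal R).spanFinrank : ℕ) : ℕ∞) = (maximalIdeal R).height := by
          exact_mod_cast h4
        rw [h3', h4']
        exact h2
      rw [← hn]
      exact_mod_cast h5
    exact e.toMulEquiv.uniqueFactorizationMonoid (ih _ hlt rfl)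
  obtain ⟨d, hd⟩ := regular_pd _ (R := R) rfl (P.under R)
  have hffr := ffr_of_pd d _ hd
  have heq : Submodule.localized' S (Submonoid.powers x) (Algebra.linearMap R S) (P.under R) = P := by
    rw [Ideal.localized'_eq_map]
    exact IsLocalization.map_under (Submonoid.powers x) S P
  apply principal_of_sf
  have hproj' : Module.Projective S (Submodule.localized' S (Submonoid.powers x)
    (Algebra.linearMap R S) (P.under R)) := by rwa [heq]
  have := sf_of_ffr (Submonoid.powers x) d _ _ (Submodule.toLocalized' S (Submonoid.powers x)
    (Algebra.linearMap R S) (P.under R)) hffr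
  rw [heq] at this
  exact this

end PartG

end RegUFD

/-- Auslander–Buchsbaum: a (noetherian) regular local ring is a unique factorization
domain.  Regularity is encoded as: the Krull dimension equals the minimal number of
generators of the maximal ideal. -/
theorem regular_local_is_UFD {R : Type*} [CommRing R] [IsDomain R] [IsNoetherianRing R]
    [IsLocalRing R] (n : ℕ) (hdim : ringKrullDim R = n)
    (hreg : ∃ s : Finset R, s.card = n ∧
      Ideal.span (s : Set R) = IsLocalRing.maximalIdeal R) :
    UniqueFactorizationMonoid R := by
  have hR : IsRegularLocalRing R := by
    obtain ⟨s, hs, hspan⟩ := hreg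
    apply IsRegularLocalRing.of_spanFinrank_maximalIdeal_le
    rw [hdim, ← hspan]
    have h1 := Submodule.spanFinrank_span_le_ncard_of_finite (R := R) (s := (s : Set R)) s.finite_toSet
    rw [Set.ncard_coe_finset, hs] at h1
    exact_mod_cast h1
  exact RegUFD.regular_ufd _ rfl
end

section
/- Let R be a strictly henselian local ring. Then every finite étale cover of Spec R is trivial, i.e., a finite disjoint union of copies of Spec R; equivalently, every finite étale R-algebra is a finite product of copies of R. -/
universe u

open IsLocalRing TensorProduct in
/-- Residue-field points of an étale algebra over a henselian local ring lift. -/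
theorem exists_lift_of_residue_point {R : Type u} [CommRing R] [HenselianLocalRing R]
    (S : Type u) [CommRing S] [Algebra R S] [Algebra.Etale R S]
    (φ : S →ₐ[R] ResidueField R) :
    ∃ ψ : S →ₐ[R] R, ∀ s, residue R (ψ s) = φ s := by
  have hP : (RingHom.ker φ).IsPrime := RingHom.ker_isPrime φ
  obtain ⟨g, hg, hstd⟩ := Algebra.IsEtaleAt.exists_isStandardEtale (R := R) (RingHom.ker φ)
  obtain ⟨P⟩ := hstd.nonempty_standardEtalePresentation
  have hgu : IsUnit (φ g) := by
    rw [isUnit_iff_ne_zero]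
    exact hg
  let φ' : Localization.Away g →ₐ[R] ResidueField R :=
    IsLocalization.Away.liftAlgHom g (f := φ) hgu
  have hφ' : ∀ s, φ' (algebraMap S _ s) = φ s := fun s ↦ by
    simp [φ', IsLocalization.Away.liftAlgHom]
  have hmap := P.hasMap.map φ'
  have hder := hmap.isUnit_derivative_f
  have hT := ((HenselianLocalRing.TFAE R).out 0 1).mp ‹HenselianLocalRing R›
  obtain ⟨a, ha, hra⟩ := hT P.f P.monic_f (φ' P.x) hmap.1
    hder.ne_zero
  have key : ∀ p : Polynomial R, residue R (Polynomial.aeval a p) = Polynomial.aeval (φ' P.x) p := by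
    intro p
    rw [← hra]
    exact (Polynomial.aeval_algebraMap_apply (ResidueField R) a p).symm
  have hm : P.HasMap a := by
    refine ⟨by simpa [Polynomial.IsRoot, Polynomial.aeval_def] using ha, ?_⟩
    have h2 := hmap.2
    rw [← key] at h2
    exact isUnit_of_map_unit (residue R) _ h2
  let ψ' : Localization.Away g →ₐ[R] R := (P.lift a hm).comp P.equivRing.toAlgHom
  have hc : (Algebra.ofId R (ResidueField R)).comp ψ' = φ' := by
    apply P.hom_ext
    simp only [ψ', AlgHom.comp_apply]
    have : P.equivRing.toAlgHom P.x = P.X := P.equivRing_x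
    rw [this, StandardEtalePair.lift_X]
    exact hra
  refine ⟨ψ'.comp (IsScalarTower.toAlgHom R S _), fun s ↦ ?_⟩
  rw [← hφ' s, ← hc]
  rfl

open IsLocalRing TensorProduct in
/-- Let `R` be a strictly henselian local ring (henselian with separably closed residue
field).  Then every finite étale `R`-algebra is a finite product of copies of `R`. -/
theorem finite_etale_algebra_over_strictly_henselian_is_trivial {R : Type u} [CommRing R]
    [HenselianLocalRing R] [IsSepClosed (IsLocalRing.ResidueField R)]
    (S : Type u) [CommRing S] [Algebra R S] [Module.Finite R S] [Algebra.Etale R S] :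
    ∃ n : ℕ, Nonempty (S ≃ₐ[R] (Fin n → R)) := by
  obtain ⟨n, ⟨e⟩⟩ := Algebra.IsFiniteSplit.nonempty_algEquiv_fun (ResidueField R)
    (ResidueField R ⊗[R] S)
  have hfree : Module.Free R S := Module.free_of_flat_of_isLocalRing
  let φ (i : Fin n) : S →ₐ[R] ResidueField R :=
    (((Pi.evalAlgHom (ResidueField R) (fun _ ↦ ResidueField R) i).comp
      e.toAlgHom).restrictScalars R).comp Algebra.TensorProduct.includeRight
  have hφ : ∀ i s, φ i s = e (1 ⊗ₜ s) i := fun i s ↦ rfl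
  choose ψ hψ using fun i ↦ exists_lift_of_residue_point S (φ i)
  let Ψ : S →ₐ[R] (Fin n → R) := AlgHom.pi ψ
  have hsurj : Function.Surjective Ψ.toLinearMap := by
    rw [← LinearMap.range_eq_top, eq_top_iff]
    refine Submodule.le_of_le_smul_of_le_jacobson_bot
      (Module.finite_def.mp inferInstance) (IsLocalRing.maximalIdeal_le_jacobson ⊥)
      (?_ : ⊤ ≤ LinearMap.range Ψ.toLinearMap ⊔ maximalIdeal R • ⊤)
    intro y _
    obtain ⟨s, hs⟩ := TensorProduct.mk_surjective R S (ResidueField R) residue_surjective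
      (e.symm fun i ↦ residue R (y i))
    refine Submodule.mem_sup.mpr ⟨Ψ s, ⟨s, rfl⟩, y - Ψ s, ?_, by ring⟩
    rw [pi_eq_sum_univ (y - Ψ s)]
    refine Submodule.sum_mem _ fun i _ ↦ Submodule.smul_mem_smul ?_ trivial
    rw [← residue_eq_zero_iff]
    have h1 : residue R (Ψ s i) = residue R (y i) := by
      change residue R (ψ i s) = _
      rw [hψ, hφ]
      have : (1 : ResidueField R) ⊗ₜ[R] s = e.symm fun i ↦ residue R (y i) := hs
      rw [this, AlgEquiv.apply_symm_apply]
    simp [h1]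
  have hrank : Module.finrank R S ≤ Module.finrank R (Fin n → R) := by
    rw [← Module.finrank_baseChange (R := ResidueField R), e.toLinearEquiv.finrank_eq]
    simp
  have hbij := OrzechProperty.bijective_of_surjective_of_finrank_le Ψ.toLinearMap hsurj hrank
  exact ⟨n, ⟨AlgEquiv.ofBijective Ψ hbij⟩⟩
end
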